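/- The topological entropy is lower semicontinuous at every ergodic toral automorphism in the C^1 topology. Precisely: let A ∈ GL(d,ℤ) be ergodic. For every ε > 0 there exists η > 0 such that for every C^1, ℤ^d-periodic map g : ℝ^d → ℝ^d with ‖g‖_{C^1} < η for which F(v) := A v + g(v) is a C^1 diffeomorphism of ℝ^d, the induced homeomorphism f : 𝕋^d → 𝕋^d (with f ∘ π = π ∘ F) satisfies h_top(f) ≥ h_top(T_A) − ε. -/

import Mathlib

open Filter

namespace Paper

/-- The real matrix associated to an integer matrix. -/
noncomputable def matR {d : ℕ} (A : Matrix (Fin d) (Fin d) ℤ) : Matrix (Fin d) (Fin d) ℝ :=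
  A.map (fun n => (n : ℝ))

/-- The complex matrix associated to an integer matrix. -/
noncomputable def matC {d : ℕ} (A : Matrix (Fin d) (Fin d) ℤ) : Matrix (Fin d) (Fin d) ℂ :=
  A.map (fun n => (n : ℂ))

/-- `A` is ergodic: no complex eigenvalue of `A` is a root of unity. -/
def IsErgodicMatrix {d : ℕ} (A : Matrix (Fin d) (Fin d) ℤ) : Prop :=
  ∀ z : ℂ, (matC A).charpoly.IsRoot z → ∀ k : ℕ, 0 < k → z ^ k ≠ 1

/-- A lattice vector, i.e. an integer vector viewed in `ℝ^d`. -/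
def latVec {d : ℕ} (m : Fin d → ℤ) : Fin d → ℝ := fun i => (m i : ℝ)

/-- The quotient (pseudo)metric on the torus `𝕋^d = ℝ^d/ℤ^d`, computed on
representatives: `d(π u, π w) = inf_{m ∈ ℤ^d} ‖u - w - m‖` for a fixed norm on `ℝ^d`. -/
noncomputable def distQ {d : ℕ} (u w : Fin d → ℝ) : ℝ :=
  ⨅ m : Fin d → ℤ, ‖u - w - latVec m‖



/-- The dynamical distance `d_n(x,y) = max_{0 ≤ j < n} ρ(f^j x, f^j y)`. -/
noncomputable def dynDist {X : Type*} (ρ : X → X → ℝ) (f : X → X) (n : ℕ) (x y : X) : ℝ :=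
  ⨆ j : Fin n, ρ (f^[(j : ℕ)] x) (f^[(j : ℕ)] y)

/-- `S` is `(n,ε)`-separated for `f` with respect to the (pseudo)metric `ρ`. -/
def IsSeparated {X : Type*} (ρ : X → X → ℝ) (f : X → X) (n : ℕ) (ε : ℝ) (S : Finset X) : Prop :=
  ∀ x ∈ S, ∀ y ∈ S, x ≠ y → ε < dynDist ρ f n x y

/-- `N(f,n,ε)`: the maximal cardinality of an `(n,ε)`-separated set. -/
noncomputable def sepNum {X : Type*} (ρ : X → X → ℝ) (f : X → X) (n : ℕ) (ε : ℝ) : ℕ :=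
  sSup {k | ∃ S : Finset X, IsSeparated ρ f n ε S ∧ S.card = k}

/-- The topological entropy
`h_top(f) = lim_{ε→0⁺} limsup_{n→∞} (1/n) log N(f,n,ε)`; since `N(f,n,ε)` is
antitone in `ε`, the limit as `ε → 0⁺` equals the supremum over `ε > 0`. -/
noncomputable def topEnt {X : Type*} (ρ : X → X → ℝ) (f : X → X) : ℝ :=
  ⨆ ε : {e : ℝ // 0 < e},
    Filter.limsup (fun n : ℕ => Real.log (sepNum ρ f n ε) / n) Filter.atTop

/-!
Only the unstable part of `A` produces entropy. Split `ℝ^d` into the unstable and the center-stable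
space of `A`. Orbits grow subexponentially on the latter, so up to a factor `C * (μ ^ d) ^ n`, with
`μ > 1` arbitrary, an `(n, e)`-separated set for `T_A` has lifts in the unit cube whose unstable
coordinates at time `n` are a definite distance apart.

If `g` has a small Lipschitz constant, then every orbit of `A` is shadowed by an orbit of `A + g`
that starts a bounded distance away and has exactly the same unstable coordinate at time `n`: it is
the fixed point of a contraction built from the Green kernel of `A`. Dilating the lifts by a large
constant before shadowing makes the shadowing orbits separated at time `n`. Finally, orbits of
`A + g` that start close in `ℝ^d` and stay close on the torus stay close in `ℝ^d`; after restricting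
to one of boundedly many initial cells, separation in `ℝ^d` is thus separation on the torus.
-/

open scoped NNReal

section GrowthSpaces

variable {𝕜 E : Type*} [NontriviallyNormedField 𝕜] [NormedAddCommGroup E] [NormedSpace 𝕜 E]
  {f : E →L[𝕜] E} {r : ℝ} {x : E}

/-- The vectors whose forward orbit under `f` grows at most like `r ^ k`. -/
def growthSpace (f : E →L[𝕜] E) (r : ℝ) : Submodule 𝕜 E where
  carrier := {x | ∃ C : ℝ, ∀ k : ℕ, ‖(f ^ k) x‖ ≤ C * r ^ k}
  zero_mem' := ⟨0, fun k => by simp⟩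
  add_mem' := by
    rintro x y ⟨C, hC⟩ ⟨D, hD⟩
    refine ⟨C + D, fun k => ?_⟩
    rw [map_add, add_mul]
    exact norm_add_le_of_le (hC k) (hD k)
  smul_mem' := by
    rintro c x ⟨C, hC⟩
    refine ⟨‖c‖ * C, fun k => ?_⟩
    rw [map_smul, norm_smul, mul_assoc]
    gcongr
    exact hC k

/-- The center-stable space of `f`: the vectors whose forward orbit grows subexponentially. -/
def centerStableSpace (f : E →L[𝕜] E) : Submodule 𝕜 E :=
  ⨅ r ∈ Set.Ioi (1 : ℝ), growthSpace f r

/-- The unstable space of `f` at rate `r` (meant for `r < 1`): the vectors having a backward orbit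
bounded by a multiple of `r ^ k`. Backward orbits are part of the data because `f` need not be
invertible. -/
def unstableSpace (f : E →L[𝕜] E) (r : ℝ) : Submodule 𝕜 E where
  carrier := {x | ∃ y : ℕ → E, y 0 = x ∧ (∀ k, f (y (k + 1)) = y k) ∧
    ∃ C : ℝ, ∀ k, ‖y k‖ ≤ C * r ^ k}
  zero_mem' := ⟨0, rfl, fun k => by simp, 0, fun k => by simp⟩
  add_mem' := by
    rintro _ _ ⟨y, rfl, hy, C, hC⟩ ⟨z, rfl, hz, D, hD⟩
    refine ⟨y + z, rfl, fun k => by simp [hy, hz], C + D, fun k => ?_⟩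
    rw [Pi.add_apply, add_mul]
    exact norm_add_le_of_le (hC k) (hD k)
  smul_mem' := by
    rintro c _ ⟨y, rfl, hy, C, hC⟩
    refine ⟨c • y, rfl, fun k => by simp [hy], ‖c‖ * C, fun k => ?_⟩
    rw [Pi.smul_apply, norm_smul, mul_assoc]
    gcongr
    exact hC k

theorem mem_centerStableSpace :
    x ∈ centerStableSpace f ↔ ∀ r : ℝ, 1 < r → x ∈ growthSpace f r := by
  simp [centerStableSpace]

theorem exists_le_mul_pow_of_le_add {u : ℕ → ℝ} {s r C : ℝ} (hs : 0 ≤ s) (hsr : s < r)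
    (hu : ∀ k, u (k + 1) ≤ s * u k + C * r ^ k) : ∃ D, ∀ k, u k ≤ D * r ^ k := by
  refine ⟨max (u 0) (C / (r - s)), fun k => ?_⟩
  have hC : C ≤ max (u 0) (C / (r - s)) * (r - s) :=
    (div_le_iff₀ (sub_pos.mpr hsr)).mp (le_max_right _ _)
  have hr : 0 ≤ r := hs.trans hsr.le
  induction k with
  | zero => simp
  | succ k ih =>
    calc u (k + 1) ≤ s * u k + C * r ^ k := hu k
      _ ≤ s * (max (u 0) (C / (r - s)) * r ^ k) + max (u 0) (C / (r - s)) * (r - s) * r ^ k := by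
        gcongr
      _ = max (u 0) (C / (r - s)) * r ^ (k + 1) := by ring

theorem mem_growthSpace_of_sub_smul_mem {z : 𝕜} (hz : ‖z‖ < r)
    (hx : f x - z • x ∈ growthSpace f r) : x ∈ growthSpace f r := by
  obtain ⟨C, hC⟩ := hx
  refine exists_le_mul_pow_of_le_add (C := C) (norm_nonneg z) hz fun k => ?_
  have hstep : (f ^ (k + 1)) x = z • (f ^ k) x + (f ^ k) (f x - z • x) := by
    rw [map_sub, map_smul, add_sub_cancel, pow_succ, mul_apply_eq_comp]
  rw [hstep]
  exact norm_add_le_of_le (norm_smul_le _ _) (hC k)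

theorem mem_centerStableSpace_of_sub_smul_mem {z : 𝕜} (hz : ‖z‖ ≤ 1)
    (hx : f x - z • x ∈ centerStableSpace f) : x ∈ centerStableSpace f :=
  mem_centerStableSpace.mpr fun r hr =>
    mem_growthSpace_of_sub_smul_mem (hz.trans_lt hr) (mem_centerStableSpace.mp hx r hr)

theorem mem_centerStableSpace_of_apply_mem (hx : f x ∈ centerStableSpace f) :
    x ∈ centerStableSpace f :=
  mem_centerStableSpace_of_sub_smul_mem (z := 0) (by simp) (by simpa using hx)

theorem mem_unstableSpace_of_sub_smul_mem {z : 𝕜} (hz0 : z ≠ 0) (hz : ‖z‖⁻¹ < r)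
    (hx : f x - z • x ∈ unstableSpace f r) : x ∈ unstableSpace f r := by
  obtain ⟨u, hu0, hu, C, hC⟩ := hx
  let y : ℕ → E := fun k => k.rec x fun k v => z⁻¹ • (v - u (k + 1))
  have hstep (k : ℕ) : y (k + 1) = z⁻¹ • (y k - u (k + 1)) := rfl
  have hsub (k : ℕ) : f (y k) - z • y k = u k := by
    induction k with
    | zero => exact hu0.symm
    | succ k ih =>
      rw [hstep, map_smul, smul_inv_smul₀ hz0, map_sub, hu, ← ih]
      simp [hz0]
  refine ⟨y, rfl, fun k => ?_, exists_le_mul_pow_of_le_add (C := ‖z‖⁻¹ * C * r)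
    (inv_nonneg.mpr (norm_nonneg z)) hz fun k => ?_⟩
  · rw [sub_eq_iff_eq_add.mp (hsub (k + 1)), hstep, smul_inv_smul₀ hz0, add_sub_cancel]
  · calc ‖y (k + 1)‖ ≤ ‖z‖⁻¹ * (‖y k‖ + C * r ^ (k + 1)) := by
          rw [hstep, norm_smul, norm_inv]
          gcongr
          exact norm_sub_le_of_le le_rfl (hC _)
      _ = ‖z‖⁻¹ * ‖y k‖ + ‖z‖⁻¹ * C * r * r ^ k := by ring

theorem mem_unstableSpace_of_orbit {y : ℕ → E} (hy : ∀ k, f (y (k + 1)) = y k) {C : ℝ}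
    (hC : ∀ k, ‖y k‖ ≤ C * r ^ k) (j : ℕ) : y j ∈ unstableSpace f r :=
  ⟨fun k => y (j + k), rfl, fun k => hy (j + k), C * r ^ j, fun k =>
    (hC (j + k)).trans_eq (by ring)⟩

theorem pow_apply_of_backward_orbit {y : ℕ → E} (hy : ∀ k, f (y (k + 1)) = y k) (k : ℕ) :
    (f ^ k) (y k) = y 0 := by
  induction k with
  | zero => rfl
  | succ k ih => rw [pow_succ, mul_apply_eq_comp, hy, ih]

theorem mem_centerStableSpace_of_backward_orbit {y : ℕ → E} (hy : ∀ k, f (y (k + 1)) = y k)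
    (h0 : y 0 ∈ centerStableSpace f) (k : ℕ) : y k ∈ centerStableSpace f := by
  induction k with
  | zero => exact h0
  | succ k ih => exact mem_centerStableSpace_of_apply_mem (by rwa [hy])

section Semiconj

variable {𝕜' G : Type*} [NontriviallyNormedField 𝕜'] [NormedAddCommGroup G] [NormedSpace 𝕜' G]
  {F : G →L[𝕜'] G} {π : G → E} {c : ℝ} {p : G}

theorem map_mem_growthSpace (hπ : Function.Semiconj π F f) (hc : 0 ≤ c)
    (hπc : ∀ p, ‖π p‖ ≤ c * ‖p‖) (hp : p ∈ growthSpace F r) : π p ∈ growthSpace f r := by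
  obtain ⟨C, hC⟩ := hp
  refine ⟨c * C, fun k => ?_⟩
  have hk : (f ^ k) (π p) = π ((F ^ k) p) := by
    simpa only [FunLike.coe_pow_eq_iterate] using ((hπ.iterate_right k) p).symm
  rw [hk, mul_assoc]
  exact (hπc _).trans (mul_le_mul_of_nonneg_left (hC k) hc)

theorem map_mem_centerStableSpace (hπ : Function.Semiconj π F f) (hc : 0 ≤ c)
    (hπc : ∀ p, ‖π p‖ ≤ c * ‖p‖) (hp : p ∈ centerStableSpace F) : π p ∈ centerStableSpace f :=
  mem_centerStableSpace.mpr fun r hr =>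
    map_mem_growthSpace hπ hc hπc (mem_centerStableSpace.mp hp r hr)

theorem map_mem_unstableSpace (hπ : Function.Semiconj π F f) (hc : 0 ≤ c)
    (hπc : ∀ p, ‖π p‖ ≤ c * ‖p‖) (hp : p ∈ unstableSpace F r) : π p ∈ unstableSpace f r := by
  obtain ⟨y, rfl, hy, C, hC⟩ := hp
  refine ⟨π ∘ y, rfl, fun k => ?_, c * C, fun k => ?_⟩
  · rw [Function.comp_apply, ← hπ, hy, Function.comp_apply]
  · rw [mul_assoc]
    exact (hπc _).trans (mul_le_mul_of_nonneg_left (hC k) hc)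

end Semiconj

theorem apply_mem_centerStableSpace (hx : x ∈ centerStableSpace f) : f x ∈ centerStableSpace f :=
  map_mem_centerStableSpace (π := f) (fun _ => rfl) (norm_nonneg f) f.le_opNorm hx

theorem apply_mem_unstableSpace (hx : x ∈ unstableSpace f r) : f x ∈ unstableSpace f r :=
  map_mem_unstableSpace (π := f) (fun _ => rfl) (norm_nonneg f) f.le_opNorm hx

theorem map_unstableSpace (f : E →L[𝕜] E) (r : ℝ) :
    (unstableSpace f r).map (f : E →ₗ[𝕜] E) = unstableSpace f r := by
  refine le_antisymm (Submodule.map_le_iff_le_comap.mpr fun x hx => apply_mem_unstableSpace hx) ?_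
  rintro x ⟨y, rfl, hy, C, hC⟩
  exact ⟨y 1, mem_unstableSpace_of_orbit hy hC 1, hy 0⟩

theorem mem_growthSpace_of_mem_unstableSpace {b : E →L[𝕜] E}
    (hb : ∀ x ∈ unstableSpace f r, b (f x) = x) (hx : x ∈ unstableSpace f r) :
    x ∈ growthSpace b r := by
  obtain ⟨y, rfl, hy, C, hC⟩ := hx
  have hyb (k : ℕ) : (b ^ k) (y 0) = y k := by
    induction k with
    | zero => rfl
    | succ k ih =>
      rw [pow_succ', mul_apply_eq_comp, ih, ← hy k, hb _ (mem_unstableSpace_of_orbit hy hC _)]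
  exact ⟨C, fun k => (congrArg norm (hyb k)).trans_le (hC k)⟩

end GrowthSpaces

theorem maxGenEigenspace_le_of_forall_mem {𝕜 E : Type*} [CommRing 𝕜] [AddCommGroup E] [Module 𝕜 E]
    {f : Module.End 𝕜 E} {z : 𝕜} {p : Submodule 𝕜 E} (hp : ∀ x, f x - z • x ∈ p → x ∈ p) :
    f.maxGenEigenspace z ≤ p := by
  intro x hx
  obtain ⟨k, hk⟩ := (Module.End.mem_maxGenEigenspace f z x).mp hx
  induction k generalizing x with
  | zero => simp_all
  | succ k ih =>
    refine hp x (ih ((Module.End.mem_maxGenEigenspace f z _).mpr ⟨k, ?_⟩) ?_) <;>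
    simpa [pow_succ] using hk

theorem exists_lt_one_forall_norm_inv_lt {𝕜 : Type*} [Norm 𝕜] {s : Set 𝕜}
    (hs : s.Finite) : ∃ ρ : ℝ, 0 < ρ ∧ ρ < 1 ∧ ∀ z ∈ s, 1 < ‖z‖ → ‖z‖⁻¹ < ρ := by
  have hnear (z : 𝕜) : ∀ᶠ ρ : ℝ in nhdsWithin 1 (Set.Iio 1), 1 < ‖z‖ → ‖z‖⁻¹ < ρ := by
    by_cases hz : 1 < ‖z‖
    · filter_upwards [eventually_nhdsWithin_of_eventually_nhds
        (eventually_gt_nhds (inv_lt_one_of_one_lt₀ hz))] with ρ hρ _ using hρ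
    · exact Eventually.of_forall fun _ h => (hz h).elim
  have hpos : ∀ᶠ ρ : ℝ in nhdsWithin 1 (Set.Iio 1), 0 < ρ :=
    eventually_nhdsWithin_of_eventually_nhds (eventually_gt_nhds one_pos)
  obtain ⟨ρ, hρ0, hρ1, hρ⟩ := (hpos.and (eventually_mem_nhdsWithin.and
    ((eventually_all_finite hs).mpr fun z _ => hnear z))).exists
  exact ⟨ρ, hρ0, hρ1, hρ⟩

theorem exists_unstableSpace_sup_centerStableSpace_eq_top_complex {E : Type*}
    [NormedAddCommGroup E] [NormedSpace ℂ E] [FiniteDimensional ℂ E] (f : E →L[ℂ] E) :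
    ∃ ρ : ℝ, 0 < ρ ∧ ρ < 1 ∧ unstableSpace f ρ ⊔ centerStableSpace f = ⊤ := by
  let g : Module.End ℂ E := f
  obtain ⟨ρ, hρ0, hρ1, hρ⟩ := exists_lt_one_forall_norm_inv_lt g.finite_hasEigenvalue
  refine ⟨ρ, hρ0, hρ1, top_le_iff.mp ?_⟩
  rw [← g.iSup_maxGenEigenspace_eq_top, iSup_le_iff]
  intro z
  rcases le_or_gt ‖z‖ 1 with hz | hz
  · exact (maxGenEigenspace_le_of_forall_mem fun x =>
      mem_centerStableSpace_of_sub_smul_mem hz).trans le_sup_right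
  by_cases hgz : g.HasEigenvalue z
  · have hz0 : z ≠ 0 := norm_pos_iff.mp (one_pos.trans hz)
    exact (maxGenEigenspace_le_of_forall_mem fun x =>
      mem_unstableSpace_of_sub_smul_mem hz0 (hρ z hgz hz)).trans le_sup_left
  · refine (maxGenEigenspace_le_of_forall_mem fun x hx => ?_).trans bot_le
    have hx' : x ∈ g.eigenspace z :=
      Module.End.mem_eigenspace_iff.mpr (sub_eq_zero.mp ((Submodule.mem_bot ℂ).mp hx))
    rwa [Module.End.hasEigenvalue_iff.not_left.mp hgz] at hx'

theorem exists_complex_semiconj {E : Type*} [NormedAddCommGroup E] [NormedSpace ℝ E]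
    [FiniteDimensional ℝ E] (f : E →L[ℝ] E) :
    ∃ (n : ℕ) (F : (Fin n → ℂ) →L[ℂ] (Fin n → ℂ)) (π : (Fin n → ℂ) →ₗ[ℝ] E),
      Function.Surjective π ∧ Function.Semiconj π F f := by
  let n := Module.finrank ℝ E
  let b := Module.finBasis ℝ E
  let M := LinearMap.toMatrix b b f
  let re : (Fin n → ℂ) →ₗ[ℝ] (Fin n → ℝ) := Complex.reLm.compLeft (Fin n)
  have hre : Function.Surjective re := fun v => ⟨fun i => v i, by ext i; simp [re]⟩
  have hM (p : Fin n → ℂ) : re ((M.map Complex.ofReal).mulVec p) = M.mulVec (re p) := by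
    ext i
    simp [re, Matrix.mulVec, dotProduct]
  have hf (v : Fin n → ℝ) : b.equivFun.symm (M.mulVec v) = f (b.equivFun.symm v) := by
    obtain ⟨x, rfl⟩ := b.equivFun.surjective v
    rw [LinearEquiv.symm_apply_apply, LinearEquiv.symm_apply_eq]
    exact LinearMap.toMatrix_mulVec_repr b b (f : E →ₗ[ℝ] E) x
  exact ⟨n, (Matrix.toLin' (M.map Complex.ofReal)).toContinuousLinearMap,
    b.equivFun.symm.toLinearMap ∘ₗ re, b.equivFun.symm.surjective.comp hre, fun p =>
      (congrArg b.equivFun.symm (hM p)).trans (hf (re p))⟩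

theorem exists_unstableSpace_sup_centerStableSpace_eq_top {E : Type*}
    [NormedAddCommGroup E] [NormedSpace ℝ E] [FiniteDimensional ℝ E] (f : E →L[ℝ] E) :
    ∃ ρ : ℝ, 0 < ρ ∧ ρ < 1 ∧ unstableSpace f ρ ⊔ centerStableSpace f = ⊤ := by
  obtain ⟨n, F, π, hπ, hsemi⟩ := exists_complex_semiconj f
  obtain ⟨ρ, hρ0, hρ1, htop⟩ := exists_unstableSpace_sup_centerStableSpace_eq_top_complex F
  refine ⟨ρ, hρ0, hρ1, Submodule.eq_top_iff'.mpr fun x => ?_⟩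
  have hπc := (LinearMap.toContinuousLinearMap π).le_opNorm
  obtain ⟨p, rfl⟩ := hπ x
  obtain ⟨u, hu, v, hv, rfl⟩ := Submodule.mem_sup.mp (htop ▸ Submodule.mem_top : p ∈ _)
  rw [map_add]
  exact Submodule.add_mem_sup (map_mem_unstableSpace hsemi (norm_nonneg _) hπc hu)
    (map_mem_centerStableSpace hsemi (norm_nonneg _) hπc hv)

section Real

variable {E : Type*} [NormedAddCommGroup E] [NormedSpace ℝ E] {f : E →L[ℝ] E} {r : ℝ}

theorem exists_norm_pow_comp_le {G : Type*} [NormedAddCommGroup G] [NormedSpace ℝ G]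
    [CompleteSpace G] {T : G →L[ℝ] E} (hr : 0 < r) (hT : ∀ x, T x ∈ growthSpace f r) :
    ∃ K, ∀ k : ℕ, ‖(f ^ k) ∘L T‖ ≤ K * r ^ k := by
  let g (k : ℕ) : G →L[ℝ] E := (r ^ k)⁻¹ • (f ^ k) ∘L T
  obtain ⟨K, hK⟩ : ∃ K, ∀ k, ‖g k‖ ≤ K := banach_steinhaus fun x => by
    obtain ⟨C, hC⟩ := hT x
    refine ⟨C, fun k => ?_⟩
    simpa [g, norm_smul, abs_of_pos hr] using (inv_mul_le_iff₀' (pow_pos hr k)).mpr (hC k)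
  refine ⟨K, fun k => ?_⟩
  have hk := hK k
  rwa [norm_smul, norm_inv, norm_pow, Real.norm_of_nonneg hr.le,
    inv_mul_le_iff₀' (pow_pos hr k)] at hk

theorem disjoint_unstableSpace_centerStableSpace [FiniteDimensional ℝ E] (f : E →L[ℝ] E)
    {ρ : ℝ} (hρ0 : 0 < ρ) (hρ1 : ρ < 1) : Disjoint (unstableSpace f ρ) (centerStableSpace f) := by
  rw [Submodule.disjoint_def]
  rintro x ⟨y, rfl, hy, C, hC⟩ hx
  obtain ⟨μ, hμ, hμρ⟩ := exists_between (one_lt_one_div hρ0 hρ1)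
  have hμ0 : 0 < μ := one_pos.trans hμ
  obtain ⟨K, hK⟩ := exists_norm_pow_comp_le (T := (centerStableSpace f).subtypeL) hμ0
    fun x => mem_centerStableSpace.mp x.2 μ hμ
  have hbound (k : ℕ) : ‖y 0‖ ≤ K * C * (μ * ρ) ^ k := by
    have hyk : y k ∈ centerStableSpace f := mem_centerStableSpace_of_backward_orbit hy hx k
    calc ‖y 0‖ = ‖((f ^ k) ∘L (centerStableSpace f).subtypeL) ⟨y k, hyk⟩‖ := by
          rw [← pow_apply_of_backward_orbit hy k]
          rfl
      _ ≤ K * μ ^ k * (C * ρ ^ k) :=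
        ContinuousLinearMap.le_of_opNorm_le_of_le _ (hK k) (hC k)
      _ = K * C * (μ * ρ) ^ k := by ring
  have hlim : Tendsto (fun k : ℕ => K * C * (μ * ρ) ^ k) atTop (nhds 0) := by
    simpa using (tendsto_pow_atTop_nhds_zero_of_lt_one (by positivity)
      ((lt_div_iff₀ hρ0).mp hμρ)).const_mul (K * C)
  exact norm_le_zero_iff.mp (ge_of_tendsto' hlim hbound)

end Real

theorem exists_inverse_on_of_isCompl {𝕜 E : Type*} [Ring 𝕜] [AddCommGroup E] [Module 𝕜 E]
    {a : Module.End 𝕜 E} {U V : Submodule 𝕜 E} (hUV : IsCompl U V) (hU : U.map a = U)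
    (hker : a.ker ≤ V) :
    ∃ b : Module.End 𝕜 E, (∀ x, b x ∈ U) ∧ (∀ x ∈ U, a (b x) = x) ∧ (∀ x ∈ U, b (a x) = x) ∧
      ∀ x ∈ V, b x = 0 := by
  have hmaps (x : E) (hx : x ∈ U) : a x ∈ U := hU.le (Submodule.mem_map_of_mem hx)
  have hinj : Function.Injective (a.restrict hmaps) := by
    refine (injective_iff_map_eq_zero _).mpr fun x hx => Subtype.ext ?_
    exact Submodule.disjoint_def.mp hUV.disjoint x x.2 (hker (congrArg Subtype.val hx))
  have hsurj : Function.Surjective (a.restrict hmaps) := fun x => by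
    obtain ⟨y, hy, hyx⟩ := hU.ge x.2
    exact ⟨⟨y, hy⟩, Subtype.ext hyx⟩
  let e : U ≃ₗ[𝕜] U := LinearEquiv.ofBijective (a.restrict hmaps) ⟨hinj, hsurj⟩
  let b : Module.End 𝕜 E := U.subtype ∘ₗ e.symm ∘ₗ U.projectionOnto V hUV
  have hb (x : E) (hx : x ∈ U) : b x = e.symm ⟨x, hx⟩ :=
    congrArg (fun y : U => (e.symm y : E)) (Submodule.projectionOnto_apply_of_mem_left hUV hx)
  refine ⟨b, fun x => Subtype.property _, fun x hx => ?_, fun x hx => ?_, fun x hx => ?_⟩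
  · rw [hb x hx]
    exact congrArg Subtype.val (e.apply_symm_apply ⟨x, hx⟩)
  · rw [hb _ (hmaps x hx)]
    exact congrArg Subtype.val (e.symm_apply_apply ⟨x, hx⟩)
  · simp [b, (Submodule.projectionOnto_apply_eq_zero_iff hUV).mpr hx]

/-- `b` inverts the unstable part of `a` and vanishes on its center-stable part: `a * b` is the
spectral projection onto the generalized eigenspaces of `a` with eigenvalues outside the closed
unit disc, `b` contracts its range, and `a` grows subexponentially on its kernel. -/
structure IsUnstableInverse {E : Type*} [NormedAddCommGroup E] [NormedSpace ℝ E]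
    (a b : E →L[ℝ] E) : Prop where
  commute : Commute a b
  mul_mul_self : b * a * b = b
  exists_contraction : ∃ ρ K : ℝ, 0 < ρ ∧ ρ < 1 ∧ ∀ k : ℕ, ‖b ^ k * (a * b)‖ ≤ K * ρ ^ k
  exists_growth : ∀ μ : ℝ, 1 < μ → ∃ K : ℝ, ∀ k : ℕ, ‖a ^ k * (1 - a * b)‖ ≤ K * μ ^ k

theorem exists_isUnstableInverse {E : Type*} [NormedAddCommGroup E] [NormedSpace ℝ E]
    [FiniteDimensional ℝ E] (a : E →L[ℝ] E) : ∃ b, IsUnstableInverse a b := by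
  obtain ⟨ρ, hρ0, hρ1, htop⟩ := exists_unstableSpace_sup_centerStableSpace_eq_top a
  have hUV : IsCompl (unstableSpace a ρ) (centerStableSpace a) :=
    ⟨disjoint_unstableSpace_centerStableSpace a hρ0 hρ1, codisjoint_iff.mpr htop⟩
  obtain ⟨b, hb, habU, hbaU, hbV⟩ : ∃ b : E →ₗ[ℝ] E, (∀ x, b x ∈ unstableSpace a ρ) ∧
      (∀ x ∈ unstableSpace a ρ, a (b x) = x) ∧ (∀ x ∈ unstableSpace a ρ, b (a x) = x) ∧
      ∀ x ∈ centerStableSpace a, b x = 0 :=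
    exists_inverse_on_of_isCompl hUV (map_unstableSpace a ρ)
      fun x (hx : a x = 0) => mem_centerStableSpace_of_apply_mem (hx ▸ zero_mem _)
  have split (x : E) : ∃ u ∈ unstableSpace a ρ, ∃ v ∈ centerStableSpace a, u + v = x :=
    Submodule.mem_sup.mp (htop ▸ Submodule.mem_top)
  have : CompleteSpace E := FiniteDimensional.complete ℝ E
  let B : E →L[ℝ] E := LinearMap.toContinuousLinearMap b
  refine ⟨B, ?_, ?_, ⟨ρ, ?_⟩, fun μ hμ => ?_⟩
  · ext x
    obtain ⟨u, hu, v, hv, rfl⟩ := split x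
    simp [B, habU u hu, hbaU u hu, hbV v hv, hbV _ (apply_mem_centerStableSpace hv)]
  · ext x
    simp [B, hbaU _ (hb x)]
  · obtain ⟨K, hK⟩ := exists_norm_pow_comp_le (f := B) (T := a * B) hρ0 fun x =>
      mem_growthSpace_of_mem_unstableSpace hbaU (apply_mem_unstableSpace (hb x))
    exact ⟨K, hρ0, hρ1, hK⟩
  · refine exists_norm_pow_comp_le (one_pos.trans hμ) fun x => ?_
    obtain ⟨u, hu, v, hv, rfl⟩ := split x
    simpa [B, habU u hu, hbV v hv] using mem_centerStableSpace.mp hv μ hμ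

section GreenKernel

variable {E : Type*} [NormedAddCommGroup E] [NormedSpace ℝ E] {a b : E →L[ℝ] E}

theorem IsUnstableInverse.isIdempotentElem (h : IsUnstableInverse a b) :
    IsIdempotentElem (a * b) := by
  rw [IsIdempotentElem, mul_assoc, ← mul_assoc b, h.mul_mul_self]

/-- The kernel `G` solving `x (j + 1) = a (x j) + y j` by `x j = ∑ i, G (j, i) (y i)`: the
center-stable part of `y` is summed over the past and the unstable part over the future, so that
`G (j, i)` decays exponentially in `i - j` and grows subexponentially in `j - i`. -/
def greenKernel (a b : E →L[ℝ] E) (j i : ℕ) : E →L[ℝ] E :=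
  if i < j then a ^ (j - 1 - i) * (1 - a * b) else -(b ^ (i + 1 - j) * (a * b))

theorem greenKernel_of_lt {i j : ℕ} (hij : i < j) :
    greenKernel a b j i = a ^ (j - 1 - i) * (1 - a * b) :=
  if_pos hij

theorem greenKernel_add_right (j k : ℕ) :
    greenKernel a b j (j + k) = -(b ^ (k + 1) * (a * b)) := by
  rw [greenKernel, if_neg (by lia), add_assoc, Nat.add_sub_cancel_left]

theorem greenKernel_succ (h : IsUnstableInverse a b) (j i : ℕ) :
    greenKernel a b (j + 1) i = a * greenKernel a b j i + if i = j then 1 else 0 := by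
  rcases lt_trichotomy i j with hij | rfl | hij
  · obtain ⟨k, rfl⟩ := Nat.exists_eq_add_of_lt hij
    rw [greenKernel_of_lt hij, greenKernel_of_lt (by lia), if_neg hij.ne, add_zero, ← mul_assoc,
      ← pow_succ']
    congr 2
    lia
  · have hP : a * (b * (a * b)) = a * b := by rw [← mul_assoc b, h.mul_mul_self]
    have hself : greenKernel a b i i = -(b * (a * b)) := by
      simpa using greenKernel_add_right (a := a) (b := b) i 0
    rw [greenKernel_of_lt i.lt_succ_self, hself, if_pos rfl, mul_neg, hP]
    simp [sub_eq_neg_add]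
  · obtain ⟨k, rfl⟩ := Nat.exists_eq_add_of_lt hij
    have hP : a * (b ^ (k + 2) * (a * b)) = b ^ (k + 1) * (a * b) := by
      calc a * (b ^ (k + 2) * (a * b)) = b ^ (k + 1) * ((a * b) * (a * b)) := by
            rw [(h.commute.pow_right _).left_comm, pow_succ, mul_assoc, ← mul_assoc b a,
              ← h.commute.eq]
        _ = b ^ (k + 1) * (a * b) := by rw [h.isIdempotentElem.eq]
    rw [if_neg hij.ne', add_zero, add_assoc j k 1, greenKernel_add_right, mul_neg, hP,
      ← greenKernel_add_right (j + 1) k]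
    congr 1
    lia

theorem mul_greenKernel_of_lt (h : IsUnstableInverse a b) {i j : ℕ} (hij : i < j) :
    a * b * greenKernel a b j i = 0 := by
  have hcomm : Commute (a * b) (a ^ (j - 1 - i)) :=
    ((Commute.refl a).mul_left h.commute.symm).pow_right _
  rw [greenKernel_of_lt hij, ← mul_assoc, hcomm.eq, mul_assoc, mul_sub, mul_one,
    h.isIdempotentElem.eq, sub_self, mul_zero]

theorem sum_norm_greenKernel_past_le {μ ν K : ℝ} (hμ : 0 ≤ μ) (hμν : μ < ν) (hK0 : 0 ≤ K)
    (hK : ∀ k : ℕ, ‖a ^ k * (1 - a * b)‖ ≤ K * μ ^ k) (j : ℕ) :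
    ∑ i ∈ Finset.range j, ‖greenKernel a b j i‖ * ν ^ i ≤ K / (ν - μ) * ν ^ j := by
  have hν : 0 < ν := hμ.trans_lt hμν
  calc ∑ i ∈ Finset.range j, ‖greenKernel a b j i‖ * ν ^ i
      ≤ ∑ i ∈ Finset.range j, K * (ν ^ i * μ ^ (j - 1 - i)) := by
        refine Finset.sum_le_sum fun i hi => ?_
        rw [greenKernel_of_lt (Finset.mem_range.mp hi), mul_comm (ν ^ i), ← mul_assoc]
        gcongr
        exact hK _
    _ = K / (ν - μ) * (ν ^ j - μ ^ j) := by
        rw [← Finset.mul_sum, geom₂_sum hμν.ne', mul_div_assoc', div_mul_eq_mul_div]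
    _ ≤ K / (ν - μ) * ν ^ j := by
        have := sub_pos.mpr hμν
        gcongr
        exact sub_le_self _ (by positivity)

theorem sum_norm_greenKernel_future_le {ρ ν K : ℝ} (hρ0 : 0 ≤ ρ) (hρ1 : ρ ≤ 1) (hν : 0 ≤ ν)
    (hρν : ρ * ν < 1) (hK0 : 0 ≤ K) (hK : ∀ k : ℕ, ‖b ^ k * (a * b)‖ ≤ K * ρ ^ k) (j n : ℕ) :
    ∑ k ∈ Finset.range n, ‖greenKernel a b j (j + k)‖ * ν ^ (j + k) ≤
      K / (1 - ρ * ν) * ν ^ j := by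
  calc ∑ k ∈ Finset.range n, ‖greenKernel a b j (j + k)‖ * ν ^ (j + k)
      ≤ ∑ k ∈ Finset.range n, K * ρ ^ k * ν ^ (j + k) := by
        refine Finset.sum_le_sum fun k _ => ?_
        rw [greenKernel_add_right, norm_neg]
        gcongr
        exact (hK _).trans (mul_le_mul_of_nonneg_left
          (pow_le_pow_of_le_one hρ0 hρ1 k.le_succ) hK0)
    _ = K * ν ^ j * ∑ k ∈ Finset.range n, (ρ * ν) ^ k := by
        rw [Finset.mul_sum]
        exact Finset.sum_congr rfl fun k _ => by ring
    _ ≤ K * ν ^ j * (1 / (1 - ρ * ν)) := by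
        gcongr
        simpa using geom_sum_Ico_le_of_lt_one (m := 0) (n := n) (by positivity) hρν
    _ = K / (1 - ρ * ν) * ν ^ j := by ring

theorem exists_sum_norm_greenKernel_le (h : IsUnstableInverse a b) :
    ∃ ν : ℝ, 1 ≤ ν ∧ ∃ D : ℝ, 0 ≤ D ∧
      ∀ j n : ℕ, ∑ i ∈ Finset.range n, ‖greenKernel a b j i‖ * ν ^ i ≤ D * ν ^ j := by
  obtain ⟨ρ, K, hρ0, hρ1, hK⟩ := h.exists_contraction
  obtain ⟨ν, hν1, hνρ⟩ := exists_between (one_lt_one_div hρ0 hρ1)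
  obtain ⟨μ, hμ1, hμν⟩ := exists_between hν1
  obtain ⟨K', hK'⟩ := h.exists_growth μ hμ1
  have hK0 : 0 ≤ K := by simpa using (norm_nonneg _).trans (hK 0)
  have hK'0 : 0 ≤ K' := by simpa using (norm_nonneg _).trans (hK' 0)
  have hν0 : 0 ≤ ν := zero_le_one.trans hν1.le
  have hρν : ρ * ν < 1 := (lt_div_iff₀' hρ0).mp hνρ
  refine ⟨ν, hν1.le, K' / (ν - μ) + K / (1 - ρ * ν), ?_, fun j n => ?_⟩
  · exact add_nonneg (div_nonneg hK'0 (sub_pos.mpr hμν).le) (div_nonneg hK0 (sub_pos.mpr hρν).le)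
  calc ∑ i ∈ Finset.range n, ‖greenKernel a b j i‖ * ν ^ i
      ≤ ∑ i ∈ Finset.range (j + n), ‖greenKernel a b j i‖ * ν ^ i :=
        Finset.sum_le_sum_of_subset_of_nonneg (Finset.range_mono (Nat.le_add_left n j))
          fun i _ _ => by positivity
    _ ≤ (K' / (ν - μ) + K / (1 - ρ * ν)) * ν ^ j := by
        rw [Finset.sum_range_add, add_mul]
        exact add_le_add
          (sum_norm_greenKernel_past_le (zero_le_one.trans hμ1.le) hμν hK'0 hK' j)
          (sum_norm_greenKernel_future_le hρ0.le hρ1.le hν0 hρν hK0 hK j n)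

/-- The solution of `x (j + 1) = a (x j) + y j`, for `j < n`, that stays close to the orbit
`a ^ j w` and has the same unstable part at time `n`. -/
def greenOrbit {n : ℕ} (a b : E →L[ℝ] E) (w : E) (y : Fin n → E) (j : ℕ) : E :=
  (a ^ j) w + ∑ i : Fin n, greenKernel a b j i (y i)

theorem greenOrbit_succ (h : IsUnstableInverse a b) {n : ℕ} (w : E) (y : Fin n → E) (j : Fin n) :
    greenOrbit a b w y (j + 1) = a (greenOrbit a b w y j) + y j := by
  have hG (i : Fin n) : greenKernel a b (j + 1) i (y i) =
      a (greenKernel a b j i (y i)) + if i = j then y i else 0 := by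
    rw [greenKernel_succ h, add_apply, mul_apply_eq_comp]
    simp only [Fin.val_inj]
    split_ifs <;> rfl
  simp only [greenOrbit, hG, pow_succ', mul_apply_eq_comp, Finset.sum_add_distrib, map_add, map_sum,
    Finset.sum_ite_eq', Finset.mem_univ, if_true, add_assoc]

theorem mul_greenOrbit (h : IsUnstableInverse a b) {n : ℕ} (w : E) (y : Fin n → E) :
    (a * b) (greenOrbit a b w y n) = (a * b) ((a ^ n) w) := by
  have hG (i : Fin n) : (a * b) (greenKernel a b n i (y i)) = 0 :=
    DFunLike.congr_fun (mul_greenKernel_of_lt h i.2) (y i)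
  rw [greenOrbit, map_add, map_sum, Finset.sum_eq_zero fun i _ => hG i, add_zero]

theorem norm_sum_greenKernel_apply_le {n : ℕ} {ν D C : ℝ} {j : ℕ}
    (hD : ∑ i ∈ Finset.range n, ‖greenKernel a b j i‖ * ν ^ i ≤ D * ν ^ j)
    (hC : 0 ≤ C) {y : Fin n → E} (hy : ∀ i, ‖y i‖ ≤ C * ν ^ (i : ℕ)) :
    ‖∑ i : Fin n, greenKernel a b j i (y i)‖ ≤ D * C * ν ^ j := by
  calc ‖∑ i : Fin n, greenKernel a b j i (y i)‖
      ≤ ∑ i : Fin n, ‖greenKernel a b j i‖ * (C * ν ^ (i : ℕ)) :=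
        norm_sum_le_of_le _ fun i _ => ContinuousLinearMap.le_opNorm_of_le _ (hy i)
    _ = C * ∑ i ∈ Finset.range n, ‖greenKernel a b j i‖ * ν ^ i := by
        rw [← Fin.sum_univ_eq_sum_range fun i => ‖greenKernel a b j i‖ * ν ^ i, Finset.mul_sum]
        simp only [mul_left_comm]
    _ ≤ C * (D * ν ^ j) := by gcongr
    _ = D * C * ν ^ j := by ring

theorem exists_eq_greenOrbit_comp [CompleteSpace E] {n : ℕ} {ν : ℝ} (hν : 0 < ν) {D η : ℝ≥0}
    (hD : ∀ j, ∑ i ∈ Finset.range n, ‖greenKernel a b j i‖ * ν ^ i ≤ D * ν ^ j)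
    (hη : D * η < 1) {g : E → E} (hg : LipschitzWith η g) (w : E) :
    ∃ x : Fin n → E, ∀ j, x j = greenOrbit a b w (g ∘ x) j := by
  -- For `ν > 1` the weights absorb the subexponential growth of the kernel, so that `D` can be
  -- chosen independently of `n`.
  let Φ (z : Fin n → E) (j : Fin n) : E :=
    (ν ^ (j : ℕ))⁻¹ • greenOrbit a b w (fun i => g (ν ^ (i : ℕ) • z i)) j
  have hΦ : ContractingWith (D * η) Φ := by
    refine ⟨hη, LipschitzWith.of_dist_le_mul fun z z' => ?_⟩
    refine (dist_pi_le_iff (by positivity)).mpr fun j => ?_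
    have hdiff (i : Fin n) : ‖g (ν ^ (i : ℕ) • z i) - g (ν ^ (i : ℕ) • z' i)‖ ≤
        η * dist z z' * ν ^ (i : ℕ) := by
      calc _ ≤ η * ‖ν ^ (i : ℕ) • z i - ν ^ (i : ℕ) • z' i‖ := hg.norm_sub_le _ _
        _ = η * dist (z i) (z' i) * ν ^ (i : ℕ) := by
          rw [← smul_sub, norm_smul, norm_pow, Real.norm_of_nonneg hν.le, ← dist_eq_norm]
          ring
        _ ≤ η * dist z z' * ν ^ (i : ℕ) := by
          gcongr
          exact dist_le_pi_dist z z' i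
    have hsum := norm_sum_greenKernel_apply_le (hD j) (by positivity) hdiff
    rw [dist_eq_norm, ← smul_sub, norm_smul, norm_inv, norm_pow, Real.norm_of_nonneg hν.le,
      inv_mul_le_iff₀ (pow_pos hν j), greenOrbit, greenOrbit, add_sub_add_left_eq_sub,
      ← Finset.sum_sub_distrib]
    simp only [← map_sub]
    exact hsum.trans_eq (by push_cast; ring)
  refine ⟨fun i => ν ^ (i : ℕ) • hΦ.fixedPoint Φ i, fun j => ?_⟩
  have hfix : Φ (hΦ.fixedPoint Φ) j = hΦ.fixedPoint Φ j := congrFun hΦ.fixedPoint_isFixedPt j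
  exact ((inv_smul_eq_iff₀ (pow_pos hν j).ne').mp hfix).symm

theorem exists_shadowing [CompleteSpace E] (h : IsUnstableInverse a b) :
    ∃ η : ℝ≥0, 0 < η ∧ ∃ D : ℝ, ∀ g : E → E, LipschitzWith η g → ∀ M, (∀ x, ‖g x‖ ≤ M) →
      ∀ (n : ℕ) (w : E), ∃ v, ‖v - w‖ ≤ D * M ∧
        (a * b) ((fun x => a x + g x)^[n] v) = (a * b) ((a ^ n) w) := by
  obtain ⟨ν, hν, D, hD0, hD⟩ := exists_sum_norm_greenKernel_le h
  lift D to ℝ≥0 using hD0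
  refine ⟨(D + 1)⁻¹, by positivity, D, fun g hg M hM n w => ?_⟩
  have hη : D * (D + 1)⁻¹ < 1 := (mul_inv_lt_iff₀ (by positivity)).mpr (by simp)
  obtain ⟨x, hx⟩ := exists_eq_greenOrbit_comp (one_pos.trans_le hν) (hD · n) hη hg w
  set o := greenOrbit a b w (g ∘ x)
  have horbit (j : ℕ) (hj : j ≤ n) : o j = (fun x => a x + g x)^[j] (o 0) := by
    induction j with
    | zero => rfl
    | succ j ih =>
      rw [Function.iterate_succ_apply', ← ih (by lia)]
      have hxj : x ⟨j, hj⟩ = o j := hx ⟨j, hj⟩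
      calc o (j + 1) = a (o j) + g (x ⟨j, hj⟩) := greenOrbit_succ h w _ ⟨j, hj⟩
        _ = a (o j) + g (o j) := by rw [hxj]
  have hM0 : 0 ≤ M := (norm_nonneg _).trans (hM 0)
  refine ⟨o 0, ?_, ?_⟩
  · have hsum := norm_sum_greenKernel_apply_le (hD 0 n) hM0 fun i : Fin n =>
      (hM (x i)).trans (le_mul_of_one_le_right hM0 (one_le_pow₀ hν))
    simpa [o, greenOrbit] using hsum
  · rw [← horbit n le_rfl, mul_greenOrbit h]

end GreenKernel

section Torus

variable {d : ℕ} {F : (Fin d → ℝ) → (Fin d → ℝ)}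

theorem distQ_le (u w : Fin d → ℝ) (m : Fin d → ℤ) : distQ u w ≤ ‖u - w - latVec m‖ :=
  ciInf_le ⟨0, by rintro _ ⟨m, rfl⟩; exact norm_nonneg _⟩ m

theorem one_le_norm_latVec {m : Fin d → ℤ} (hm : m ≠ 0) : 1 ≤ ‖latVec m‖ := by
  obtain ⟨i, hi⟩ := Function.ne_iff.mp hm
  refine le_trans ?_ (norm_le_pi_norm (latVec m) i)
  rw [latVec, Real.norm_eq_abs]
  exact_mod_cast Int.one_le_abs hi

/-- The representative of `x` modulo `ℤ^d` in the fundamental domain `[0,1)^d`. -/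
noncomputable def fractVec (x : Fin d → ℝ) : Fin d → ℝ := fun i => Int.fract (x i)

theorem fractVec_add_latVec (x : Fin d → ℝ) : fractVec x + latVec (fun i => ⌊x i⌋) = x :=
  funext fun i => Int.fract_add_floor (x i)

theorem norm_fractVec_le (x : Fin d → ℝ) : ‖fractVec x‖ ≤ 1 := by
  refine (pi_norm_le_iff_of_nonneg zero_le_one).mpr fun i => ?_
  rw [fractVec, Real.norm_of_nonneg (Int.fract_nonneg _)]
  exact (Int.fract_lt_one _).le

theorem norm_le_of_periodic {g : (Fin d → ℝ) → (Fin d → ℝ)} {η : ℝ≥0} (hg : LipschitzWith η g)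
    (hper : ∀ v (m : Fin d → ℤ), g (v + latVec m) = g v) (v : Fin d → ℝ) :
    ‖g v‖ ≤ ‖g 0‖ + η := by
  have hfract : g v = g (fractVec v) := by
    rw [← hper (fractVec v) fun i => ⌊v i⌋, fractVec_add_latVec]
  calc ‖g v‖ ≤ ‖g 0‖ + ‖g (fractVec v) - g 0‖ := by
        rw [hfract]
        exact norm_le_norm_add_norm_sub' _ _
    _ ≤ ‖g 0‖ + η * ‖fractVec v - 0‖ := by gcongr; exact hg.norm_sub_le _ _
    _ ≤ ‖g 0‖ + η := by
        rw [sub_zero]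
        gcongr
        exact mul_le_of_le_one_right η.coe_nonneg (norm_fractVec_le v)

/-- `F` descends to a map of the torus. -/
def IsTorusLift (F : (Fin d → ℝ) → (Fin d → ℝ)) : Prop :=
  ∀ v (m : Fin d → ℤ), ∃ m' : Fin d → ℤ, F (v + latVec m) = F v + latVec m'

theorem isTorusLift_matR_mulVec (A : Matrix (Fin d) (Fin d) ℤ) :
    IsTorusLift (matR A).mulVec := by
  refine fun v m => ⟨A.mulVec m, ?_⟩
  rw [Matrix.mulVec_add]
  congr 1
  ext i
  simp [Matrix.mulVec, dotProduct, matR, latVec]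

theorem IsTorusLift.add_periodic (hF : IsTorusLift F) {g : (Fin d → ℝ) → (Fin d → ℝ)}
    (hg : ∀ v (m : Fin d → ℤ), g (v + latVec m) = g v) : IsTorusLift fun v => F v + g v := by
  intro v m
  obtain ⟨m', hm'⟩ := hF v m
  exact ⟨m', by simp only [hm', hg, add_right_comm]⟩

theorem IsTorusLift.iterate (hF : IsTorusLift F) (j : ℕ) : IsTorusLift F^[j] := by
  induction j with
  | zero => exact fun v m => ⟨m, rfl⟩
  | succ j ih =>
    intro v m
    obtain ⟨m₁, h₁⟩ := ih v m
    obtain ⟨m₂, h₂⟩ := hF (F^[j] v) m₁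
    exact ⟨m₂, by rw [Function.iterate_succ_apply', Function.iterate_succ_apply', h₁, h₂]⟩

theorem IsTorusLift.distQ_le_norm_fractVec (hF : IsTorusLift F) (x y : Fin d → ℝ) :
    distQ (F x) (F y) ≤ ‖F (fractVec x) - F (fractVec y)‖ := by
  obtain ⟨m, hm⟩ := hF (fractVec x) (fun i => ⌊x i⌋)
  obtain ⟨k, hk⟩ := hF (fractVec y) (fun i => ⌊y i⌋)
  rw [fractVec_add_latVec] at hm hk
  refine (distQ_le _ _ (m - k)).trans (le_of_eq ?_)
  congr 1
  rw [hm, hk]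
  ext i
  simp only [latVec, Pi.sub_apply, Pi.add_apply, Int.cast_sub]
  ring

theorem card_Icc_floor_neg_floor_le {t : ℝ} (ht : 0 ≤ t) :
    ((Finset.Icc ⌊-t⌋ ⌊t⌋).card : ℝ) ≤ 2 * (t + 1) := by
  have hle : ⌊-t⌋ ≤ ⌊t⌋ := Int.floor_le_floor (by linarith)
  have hcard : ((Finset.Icc ⌊-t⌋ ⌊t⌋).card : ℝ) = ⌊t⌋ + 1 - ⌊-t⌋ := by
    exact_mod_cast Int.card_Icc_of_le _ _ (by linarith)
  linarith [Int.floor_le t, Int.sub_one_lt_floor (-t)]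

theorem exists_subset_norm_sub_le {α : Type*} (S : Finset α) (f : α → Fin d → ℝ) {M h : ℝ}
    (hM : 0 ≤ M) (hh : 0 < h) (hf : ∀ x ∈ S, ‖f x‖ ≤ M) :
    ∃ T ⊆ S, (S.card : ℝ) ≤ (2 * (M / h + 1)) ^ d * T.card ∧
      ∀ x ∈ T, ∀ y ∈ T, ‖f x - f y‖ ≤ h := by
  classical
  let I : Finset ℤ := Finset.Icc ⌊-(M / h)⌋ ⌊M / h⌋
  let c (x : α) (i : Fin d) : ℤ := ⌊f x i / h⌋
  have hMh : 0 ≤ M / h := div_nonneg hM hh.le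
  have hc (x) (hx : x ∈ S) : c x ∈ Fintype.piFinset fun _ : Fin d => I := by
    refine Fintype.mem_piFinset.mpr fun i => Finset.mem_Icc.mpr ?_
    have hxi : |f x i| ≤ M := (norm_le_pi_norm (f x) i).trans (hf x hx)
    have hxi' := abs_le.mp (show |f x i / h| ≤ M / h by rw [abs_div, abs_of_pos hh]; gcongr)
    exact ⟨Int.floor_le_floor hxi'.1, Int.floor_le_floor hxi'.2⟩
  have hI : I.Nonempty := Finset.nonempty_Icc.mpr (Int.floor_le_floor (by linarith))
  have hpos : (0 : ℝ) < I.card ^ d := pow_pos (mod_cast hI.card_pos) d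
  obtain ⟨y, -, hy⟩ := Finset.exists_le_card_fiber_of_nsmul_le_card_of_maps_to
    (b := (S.card : ℝ) / I.card ^ d) hc (Fintype.piFinset_nonempty.mpr fun _ => hI)
    (by simp [mul_div_cancel₀ _ hpos.ne'])
  refine ⟨S.filter fun x => c x = y, Finset.filter_subset _ _, ?_, fun x hx z hz => ?_⟩
  · calc (S.card : ℝ) ≤ I.card ^ d * (S.filter fun x => c x = y).card := (div_le_iff₀' hpos).mp hy
      _ ≤ _ := by
        gcongr
        exact card_Icc_floor_neg_floor_le hMh
  · refine (pi_norm_le_iff_of_nonneg hh.le).mpr fun i => ?_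
    have hfloor : ⌊f x i / h⌋ = ⌊f z i / h⌋ :=
      congrFun ((Finset.mem_filter.mp hx).2.trans (Finset.mem_filter.mp hz).2.symm) i
    have habs := Int.abs_sub_lt_one_of_floor_eq_floor hfloor
    rw [← sub_div, abs_div, abs_of_pos hh, div_lt_one hh] at habs
    exact habs.le

end Torus

section SeparationNumbers

theorem le_dynDist {X : Type*} (ρ : X → X → ℝ) (f : X → X) {n j : ℕ} (hj : j < n) (x y : X) :
    ρ (f^[j] x) (f^[j] y) ≤ dynDist ρ f n x y :=
  le_ciSup (f := fun j : Fin n => ρ (f^[(j : ℕ)] x) (f^[(j : ℕ)] y))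
    (Set.finite_range _).bddAbove ⟨j, hj⟩

theorem exists_lt_of_lt_dynDist {X : Type*} {ρ : X → X → ℝ} {f : X → X} {n : ℕ} {e : ℝ}
    (he : 0 ≤ e) {x y : X} (h : e < dynDist ρ f n x y) : ∃ j < n, e < ρ (f^[j] x) (f^[j] y) := by
  by_contra! hcon
  exact absurd (Real.iSup_le (fun j : Fin n => hcon j j.2) he) (not_le.mpr h)

variable {d : ℕ} {F : (Fin d → ℝ) → (Fin d → ℝ)} {L : ℝ≥0}

theorem card_le_of_isSeparated (hF : IsTorusLift F) (hLip : LipschitzWith L F) {n : ℕ} {e : ℝ}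
    (he : 0 < e) {S : Finset (Fin d → ℝ)} (hS : IsSeparated distQ F n e S) :
    (S.card : ℝ) ≤ (2 * (e⁻¹ + 1)) ^ d * ((L + 1 : ℝ) ^ d) ^ n := by
  have hL : 1 ≤ (L + 1 : ℝ) ^ n := one_le_pow₀ (by simp)
  obtain ⟨T, hTS, hcard, hT⟩ := exists_subset_norm_sub_le S fractVec zero_le_one
    (div_pos he (one_pos.trans_le hL)) fun x _ => norm_fractVec_le x
  have hT1 : T.card ≤ 1 := by
    refine Finset.card_le_one.mpr fun x hx y hy => ?_
    by_contra hxy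
    obtain ⟨j, hj, hlt⟩ := exists_lt_of_lt_dynDist he.le (hS x (hTS hx) y (hTS hy) hxy)
    refine hlt.not_ge ?_
    calc _ ≤ _ := (hF.iterate j).distQ_le_norm_fractVec x y
      _ ≤ (L : ℝ) ^ j * ‖fractVec x - fractVec y‖ := by
          simpa using (hLip.iterate j).norm_sub_le (fractVec x) (fractVec y)
      _ ≤ (L + 1 : ℝ) ^ n * (e / (L + 1) ^ n) := by
          gcongr ?_ * ?_
          · exact (pow_le_pow_left₀ L.coe_nonneg (by simp) j).trans
              (pow_le_pow_right₀ (by simp) hj.le)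
          · exact hT x hx y hy
      _ = e := mul_div_cancel₀ _ (by positivity)
  calc (S.card : ℝ) ≤ (2 * (1 / (e / (L + 1) ^ n) + 1)) ^ d * T.card := hcard
    _ ≤ (2 * (1 / (e / (L + 1) ^ n) + 1)) ^ d * 1 := by
        gcongr
        exact_mod_cast hT1
    _ ≤ (2 * (e⁻¹ * (L + 1) ^ n + (L + 1) ^ n)) ^ d := by
        rw [mul_one, one_div_div, div_eq_inv_mul]
        gcongr
    _ = (2 * (e⁻¹ + 1)) ^ d * ((L + 1 : ℝ) ^ d) ^ n := by
        rw [← pow_mul, mul_comm d n, pow_mul, ← mul_pow]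
        ring

theorem bddAbove_card_isSeparated (hF : IsTorusLift F) (hLip : LipschitzWith L F) (n : ℕ) {e : ℝ}
    (he : 0 < e) :
    BddAbove {k | ∃ S : Finset (Fin d → ℝ), IsSeparated distQ F n e S ∧ S.card = k} := by
  refine ⟨⌊(2 * (e⁻¹ + 1)) ^ d * ((L + 1 : ℝ) ^ d) ^ n⌋₊, ?_⟩
  rintro _ ⟨S, hS, rfl⟩
  exact Nat.le_floor (card_le_of_isSeparated hF hLip he hS)

theorem exists_card_eq_sepNum (hF : IsTorusLift F) (hLip : LipschitzWith L F) (n : ℕ) {e : ℝ}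
    (he : 0 < e) :
    ∃ S : Finset (Fin d → ℝ), IsSeparated distQ F n e S ∧ S.card = sepNum distQ F n e :=
  Nat.sSup_mem (s := {k | ∃ S : Finset (Fin d → ℝ), IsSeparated distQ F n e S ∧ S.card = k})
    ⟨0, ∅, by simp [IsSeparated], rfl⟩ (bddAbove_card_isSeparated hF hLip n he)

theorem norm_iterate_sub_le_of_distQ_le (hLip : LipschitzWith L F) {n : ℕ} {x y : Fin d → ℝ}
    (hxy : ‖x - y‖ ≤ 1 / (L + 1))
    (hd : ∀ j < n, distQ (F^[j] x) (F^[j] y) ≤ 1 / (2 * (L + 1))) :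
    ∀ j < n, ‖F^[j] x - F^[j] y‖ ≤ 1 / (L + 1) := by
  intro j
  induction j with
  | zero => exact fun _ => hxy
  | succ j ih =>
    intro hj
    have hlt : (1 / (2 * (L + 1)) : ℝ) < 1 / (L + 1) :=
      one_div_lt_one_div_of_lt (by positivity) (by linarith [L.coe_nonneg])
    obtain ⟨m, hm⟩ := exists_lt_of_ciInf_lt ((hd (j + 1) hj).trans_lt hlt)
    have hstep : ‖F^[j + 1] x - F^[j + 1] y‖ ≤ L * (1 / (L + 1)) := by
      rw [Function.iterate_succ_apply', Function.iterate_succ_apply']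
      exact (hLip.norm_sub_le _ _).trans (by gcongr; exact ih (by lia))
    have hm0 : m = 0 := by
      by_contra hne
      have hlat : ‖latVec m‖ ≤ ‖F^[j + 1] x - F^[j + 1] y‖ +
          ‖F^[j + 1] x - F^[j + 1] y - latVec m‖ := by
        simpa using norm_sub_le (F^[j + 1] x - F^[j + 1] y)
          (F^[j + 1] x - F^[j + 1] y - latVec m)
      have hsum : (L * (1 / (L + 1)) + 1 / (L + 1) : ℝ) = 1 := by field_simp
      linarith [one_le_norm_latVec hne]
    have hlat0 : latVec (0 : Fin d → ℤ) = 0 := by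
      ext i
      simp [latVec]
    rw [hm0, hlat0, sub_zero] at hm
    exact hm.le

theorem card_le_sepNum (hF : IsTorusLift F) (hLip : LipschitzWith L F) (n : ℕ) {α : Type*}
    (T : Finset α) (v : α → Fin d → ℝ) {M : ℝ} (hM : 0 ≤ M) (hv : ∀ x ∈ T, ‖v x‖ ≤ M)
    (hsep : ∀ x ∈ T, ∀ y ∈ T, x ≠ y → 1 < ‖F^[n] (v x) - F^[n] (v y)‖) :
    (T.card : ℝ) ≤
      (2 * (M * (L + 1) + 1)) ^ d * sepNum distQ F (n + 1) (1 / (2 * (L + 1))) := by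
  classical
  obtain ⟨U, hUT, hcard, hU⟩ := exists_subset_norm_sub_le (h := 1 / (L + 1)) T v hM
    (by positivity) hv
  have hinj : Set.InjOn v U := by
    intro x hx y hy hxy
    by_contra hne
    have := hsep x (hUT hx) y (hUT hy) hne
    rw [hxy, sub_self, norm_zero] at this
    linarith
  have hUsep : IsSeparated distQ F (n + 1) (1 / (2 * (L + 1))) (U.image v) := by
    intro p hp q hq hpq
    obtain ⟨x, hx, rfl⟩ := Finset.mem_image.mp hp
    obtain ⟨y, hy, rfl⟩ := Finset.mem_image.mp hq
    by_contra! hle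
    have hclose := norm_iterate_sub_le_of_distQ_le hLip (hU x hx y hy)
      (fun j hj => (le_dynDist distQ F hj (v x) (v y)).trans hle) n n.lt_succ_self
    have hL : (1 / (L + 1) : ℝ) ≤ 1 := div_le_one_of_le₀ (by simp) (by positivity)
    exact (hsep x (hUT hx) y (hUT hy) (ne_of_apply_ne v hpq)).not_ge (hclose.trans hL)
  have hUcard : U.card ≤ sepNum distQ F (n + 1) (1 / (2 * (L + 1))) := by
    rw [← Finset.card_image_of_injOn hinj]
    exact le_csSup (bddAbove_card_isSeparated hF hLip _ (by positivity)) ⟨_, hUsep, rfl⟩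
  calc (T.card : ℝ) ≤ (2 * (M / (1 / (L + 1)) + 1)) ^ d * U.card := hcard
    _ = (2 * (M * (L + 1) + 1)) ^ d * U.card := by rw [div_div_eq_mul_div, div_one]
    _ ≤ _ := by gcongr

end SeparationNumbers

theorem IsUnstableInverse.pow_mul_mul_pow {E : Type*} [NormedAddCommGroup E] [NormedSpace ℝ E]
    {a b : E →L[ℝ] E} (h : IsUnstableInverse a b) (k : ℕ) : b ^ k * (a * b) * a ^ k = a * b := by
  calc b ^ k * (a * b) * a ^ k = (a * b) ^ k * (a * b) := by
        rw [mul_assoc, ((Commute.refl a).mul_left h.commute.symm).pow_right k |>.eq, ← mul_assoc,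
          h.commute.mul_pow, (h.commute.pow_pow k k).eq]
    _ = a * b := by rw [← pow_succ, h.isIdempotentElem.pow_succ_eq]

theorem IsUnstableInverse.exists_norm_pow_apply_le {E : Type*} [NormedAddCommGroup E]
    [NormedSpace ℝ E] {a b : E →L[ℝ] E} (h : IsUnstableInverse a b) {μ : ℝ} (hμ : 1 < μ) :
    ∃ K : ℝ, 0 < K ∧ ∀ n : ℕ, ∀ j ≤ n, ∀ z : E,
      ‖(a ^ j) z‖ ≤ K * ‖(a * b) ((a ^ n) z)‖ + K * μ ^ n * ‖z‖ := by
  obtain ⟨ρ, K₁, hρ0, hρ1, hK₁⟩ := h.exists_contraction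
  obtain ⟨K₂, hK₂⟩ := h.exists_growth μ hμ
  have hK₁0 : 0 ≤ K₁ := by simpa using (norm_nonneg _).trans (hK₁ 0)
  have hK₂0 : 0 ≤ K₂ := by simpa using (norm_nonneg _).trans (hK₂ 0)
  refine ⟨K₁ + K₂ + 1, by positivity, fun n j hj z => ?_⟩
  obtain ⟨k, rfl⟩ := Nat.exists_eq_add_of_le' hj
  have hsplit : a ^ j = b ^ k * (a * b) * (a * b * a ^ (k + j)) + a ^ j * (1 - a * b) := by
    have hP : a * b * a ^ j = a ^ j * (a * b) :=
      ((Commute.refl a).mul_left h.commute.symm).pow_right j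
    have hback : b ^ k * (a * b) * (a * b * a ^ (k + j)) = a ^ j * (a * b) := by
      rw [← mul_assoc, mul_assoc (b ^ k), h.isIdempotentElem.eq, pow_add, ← mul_assoc,
        h.pow_mul_mul_pow, hP]
    rw [hback, mul_sub, mul_one, add_sub_cancel]
  have hunstable : ‖b ^ k * (a * b)‖ ≤ K₁ + K₂ + 1 := by
    linarith [hK₁ k, mul_le_of_le_one_right hK₁0 (pow_le_one₀ hρ0.le hρ1.le : ρ ^ k ≤ 1)]
  have hstable : ‖a ^ j * (1 - a * b)‖ ≤ (K₁ + K₂ + 1) * μ ^ (k + j) :=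
    (hK₂ j).trans (by gcongr <;> linarith)
  calc ‖(a ^ j) z‖ = ‖(b ^ k * (a * b)) ((a * b) ((a ^ (k + j)) z)) +
        (a ^ j * (1 - a * b)) z‖ := congrArg (fun f : E →L[ℝ] E => ‖f z‖) hsplit
    _ ≤ _ := norm_add_le_of_le (ContinuousLinearMap.le_of_opNorm_le _ hunstable _)
      (ContinuousLinearMap.le_of_opNorm_le _ hstable _)

section Comparison

variable {d : ℕ} {a b : (Fin d → ℝ) →L[ℝ] (Fin d → ℝ)} {F : (Fin d → ℝ) → (Fin d → ℝ)} {L : ℝ≥0}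

theorem exists_subset_lt_norm_of_isSeparated (ha : IsTorusLift a) {q : (Fin d → ℝ) → (Fin d → ℝ)}
    {K H e : ℝ} (hK : 0 < K) (hH : 0 < H) (he : 0 < e) {n : ℕ}
    (hq : ∀ j ≤ n, ∀ z, ‖(a ^ j) z‖ ≤ K * ‖q z‖ + H * ‖z‖)
    {S : Finset (Fin d → ℝ)} (hS : IsSeparated distQ a (n + 1) e S) :
    ∃ T ⊆ S, (S.card : ℝ) ≤ (2 * (2 * H / e + 1)) ^ d * T.card ∧
      ∀ x ∈ T, ∀ y ∈ T, x ≠ y → e / (2 * K) < ‖q (fractVec x - fractVec y)‖ := by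
  obtain ⟨T, hTS, hcard, hT⟩ := exists_subset_norm_sub_le (h := e / (2 * H)) S fractVec
    zero_le_one (by positivity) fun x _ => norm_fractVec_le x
  rw [one_div_div] at hcard
  refine ⟨T, hTS, hcard, fun x hx y hy hxy => ?_⟩
  obtain ⟨j, hj, hlt⟩ := exists_lt_of_lt_dynDist he.le (hS x (hTS hx) y (hTS hy) hxy)
  have hfar : e < K * ‖q (fractVec x - fractVec y)‖ + e / 2 := by
    calc e < ‖(a ^ j) (fractVec x - fractVec y)‖ := by
          rw [map_sub, FunLike.coe_pow_eq_iterate]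
          exact hlt.trans_le ((ha.iterate j).distQ_le_norm_fractVec x y)
      _ ≤ K * ‖q (fractVec x - fractVec y)‖ + H * (e / (2 * H)) :=
          (hq j (Nat.lt_succ_iff.mp hj) _).trans (by gcongr; exact hT x hx y hy)
      _ = K * ‖q (fractVec x - fractVec y)‖ + e / 2 := by field_simp
  rw [div_lt_iff₀' (by positivity)]
  linarith

theorem card_le_sepNum_of_shadowing (hF : IsTorusLift F) (hLip : LipschitzWith L F)
    {p q : (Fin d → ℝ) →L[ℝ] (Fin d → ℝ)} {n : ℕ} {D : ℝ}
    (hshadow : ∀ w, ∃ v, ‖v - w‖ ≤ D ∧ p (F^[n] v) = q w) {r : ℝ} (hr : 0 < r)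
    {T : Finset (Fin d → ℝ)}
    (hT : ∀ x ∈ T, ∀ y ∈ T, x ≠ y → r < ‖q (fractVec x - fractVec y)‖) :
    (T.card : ℝ) ≤ (2 * ((D + (‖p‖ + 1) / r) * (L + 1) + 1)) ^ d *
      sepNum distQ F (n + 1) (1 / (2 * (L + 1))) := by
  choose v hv hvq using hshadow
  have hD : 0 ≤ D := (norm_nonneg _).trans (hv 0)
  set R : ℝ := (‖p‖ + 1) / r
  have hR : 0 ≤ R := by positivity
  refine card_le_sepNum hF hLip n T (fun x => v (R • fractVec x)) (by positivity)
    (fun x _ => ?_) fun x hx y hy hxy => ?_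
  · calc ‖v (R • fractVec x)‖ ≤ ‖v (R • fractVec x) - R • fractVec x‖ + ‖R • fractVec x‖ :=
          norm_le_norm_sub_add _ _
      _ ≤ D + R := by
          refine add_le_add (hv _) ?_
          rw [norm_smul, Real.norm_of_nonneg hR]
          exact mul_le_of_le_one_right hR (norm_fractVec_le x)
  · by_contra! hle
    have hpq : p (F^[n] (v (R • fractVec x)) - F^[n] (v (R • fractVec y))) =
        R • q (fractVec x - fractVec y) := by
      rw [map_sub, hvq, hvq, ← map_sub, ← smul_sub, map_smul]
    have hlt : R * r < ‖R • q (fractVec x - fractVec y)‖ := by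
      rw [norm_smul, Real.norm_of_nonneg hR]
      exact mul_lt_mul_of_pos_left (hT x hx y hy hxy) (by positivity)
    rw [← hpq, div_mul_cancel₀ _ hr.ne'] at hlt
    linarith [p.le_opNorm_of_le hle]

theorem exists_sepNum_le (h : IsUnstableInverse a b) (ha : IsTorusLift a) (hF : IsTorusLift F)
    (hLip : LipschitzWith L F) {D : ℝ}
    (hshadow : ∀ (n : ℕ) w, ∃ v, ‖v - w‖ ≤ D ∧ (a * b) (F^[n] v) = (a * b) ((a ^ n) w))
    {e μ : ℝ} (he : 0 < e) (hμ : 1 < μ) :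
    ∃ C : ℝ, 1 ≤ C ∧ ∀ n : ℕ, (sepNum distQ a (n + 1) e : ℝ) ≤
      C * (μ ^ d) ^ n * sepNum distQ F (n + 1) (1 / (2 * (L + 1))) := by
  obtain ⟨K, hK, hest⟩ := h.exists_norm_pow_apply_le hμ
  have hD : 0 ≤ D := by
    obtain ⟨v, hv, -⟩ := hshadow 0 0
    exact (norm_nonneg _).trans hv
  set c₁ : ℝ := 2 * (2 * K / e + 1)
  set c₂ : ℝ := 2 * ((D + (‖a * b‖ + 1) / (e / (2 * K))) * (L + 1) + 1)
  have hone {t : ℝ} (ht : 0 ≤ t) : 1 ≤ 2 * (t + 1) := by linarith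
  have hc₁ : 1 ≤ c₁ := hone (by positivity)
  have hc₂ : 1 ≤ c₂ := hone (by positivity)
  refine ⟨c₁ ^ d * c₂ ^ d, one_le_mul_of_one_le_of_one_le (one_le_pow₀ hc₁) (one_le_pow₀ hc₂),
    fun n => ?_⟩
  obtain ⟨S, hS, hScard⟩ := exists_card_eq_sepNum ha a.lipschitz (n + 1) he
  obtain ⟨T, -, hST, hT⟩ := exists_subset_lt_norm_of_isSeparated ha hK (by positivity) he
    (q := fun z => (a * b) ((a ^ n) z)) (hest n) hS
  have hTF := card_le_sepNum_of_shadowing hF hLip (q := (a * b) * a ^ n) (hshadow n)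
    (by positivity) hT
  have hbase : 2 * (2 * (K * μ ^ n) / e + 1) ≤ c₁ * μ ^ n := by
    have hμn : 1 ≤ μ ^ n := one_le_pow₀ hμ.le
    calc 2 * (2 * (K * μ ^ n) / e + 1) ≤ 2 * (2 * (K * μ ^ n) / e + μ ^ n) := by gcongr
      _ = c₁ * μ ^ n := by ring
  calc (sepNum distQ a (n + 1) e : ℝ) = S.card := by rw [hScard]
    _ ≤ (2 * (2 * (K * μ ^ n) / e + 1)) ^ d * T.card := hST
    _ ≤ (c₁ * μ ^ n) ^ d * (c₂ ^ d * sepNum distQ F (n + 1) (1 / (2 * (L + 1)))) := by gcongr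
    _ = _ := by rw [mul_pow, ← pow_mul, ← pow_mul, mul_comm n d]; ring

end Comparison

section Entropy

theorem log_natCast_le_add {m n : ℕ} {c : ℝ} (hc : 1 ≤ c) (h : (m : ℝ) ≤ c * n) :
    Real.log m ≤ Real.log c + Real.log n := by
  rcases Nat.eq_zero_or_pos m with rfl | hm
  · rw [Nat.cast_zero, Real.log_zero]
    exact add_nonneg (Real.log_nonneg hc) (Real.log_natCast_nonneg n)
  · have hn : (n : ℝ) ≠ 0 := by
      rintro hn
      rw [hn, mul_zero] at h
      exact hm.ne' (by exact_mod_cast h.antisymm m.cast_nonneg)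
    rw [← Real.log_mul (by positivity) hn]
    exact Real.log_le_log (by exact_mod_cast hm) h

theorem eventually_log_div_le {u w : ℕ → ℕ} {C c : ℝ} (hC : 1 ≤ C) (hc : 1 ≤ c)
    (huw : ∀ᶠ n in atTop, (u n : ℝ) ≤ C * c ^ n * w n) {δ : ℝ} (hδ : 0 < δ) :
    ∀ᶠ n : ℕ in atTop, Real.log (u n) / n ≤ Real.log (w n) / n + Real.log c + δ := by
  have hconst := (tendsto_const_div_atTop_nhds_zero_nat (Real.log C)).eventually_le_const hδ
  filter_upwards [huw, hconst, eventually_gt_atTop 0] with n hn hCn hn0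
  have hlog : Real.log (u n) ≤ Real.log C + n * Real.log c + Real.log (w n) := by
    rw [← Real.log_pow, ← Real.log_mul (by positivity) (by positivity)]
    exact log_natCast_le_add (one_le_mul_of_one_le_of_one_le hC (one_le_pow₀ hc)) hn
  calc Real.log (u n) / n ≤ (Real.log C + n * Real.log c + Real.log (w n)) / n := by gcongr
    _ = Real.log (w n) / n + Real.log c + Real.log C / n := by field_simp; ring
    _ ≤ _ := by gcongr

theorem limsup_log_div_le_of_eventually_le {u : ℕ → ℕ} {B : ℝ}
    (hu : ∀ᶠ n : ℕ in atTop, Real.log (u n) / n ≤ B) :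
    limsup (fun n : ℕ => Real.log (u n) / n) atTop ≤ B :=
  limsup_le_of_le (isCoboundedUnder_le_of_le atTop (x := 0) fun n =>
    div_nonneg (Real.log_natCast_nonneg _) n.cast_nonneg) hu

variable {d : ℕ} {F : (Fin d → ℝ) → (Fin d → ℝ)} {L : ℝ≥0}

theorem eventually_log_sepNum_div_le (hF : IsTorusLift F) (hLip : LipschitzWith L F) {e : ℝ}
    (he : 0 < e) :
    ∀ᶠ n : ℕ in atTop, Real.log (sepNum distQ F n e) / n ≤ Real.log ((L + 1 : ℝ) ^ d) + 1 := by
  have hle (n : ℕ) : (sepNum distQ F n e : ℝ) ≤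
      (2 * (e⁻¹ + 1)) ^ d * ((L + 1 : ℝ) ^ d) ^ n * (1 : ℕ) := by
    obtain ⟨S, hS, hcard⟩ := exists_card_eq_sepNum hF hLip n he
    simpa [hcard] using card_le_of_isSeparated hF hLip he hS
  have hC : 1 ≤ 2 * (e⁻¹ + 1) := by linarith [inv_pos.mpr he]
  simpa using eventually_log_div_le (w := fun _ => 1) (one_le_pow₀ hC) (one_le_pow₀ (by simp))
    (Eventually.of_forall hle) one_pos

theorem limsup_log_sepNum_le_topEnt (hF : IsTorusLift F) (hLip : LipschitzWith L F) {e : ℝ}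
    (he : 0 < e) :
    limsup (fun n : ℕ => Real.log (sepNum distQ F n e) / n) atTop ≤ topEnt distQ F := by
  refine le_ciSup (f := fun ε : {e : ℝ // 0 < e} =>
    limsup (fun n : ℕ => Real.log (sepNum distQ F n ε) / n) atTop) ?_ ⟨e, he⟩
  refine ⟨Real.log ((L + 1 : ℝ) ^ d) + 1, ?_⟩
  rintro _ ⟨ε, rfl⟩
  exact limsup_log_div_le_of_eventually_le (eventually_log_sepNum_div_le hF hLip ε.2)

theorem limsup_log_div_le_add {u w : ℕ → ℕ} {C c : ℝ} (hC : 1 ≤ C) (hc : 1 ≤ c)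
    (huw : ∀ᶠ n in atTop, (u n : ℝ) ≤ C * c ^ n * w n)
    (hw : IsBoundedUnder (· ≤ ·) atTop fun n : ℕ => Real.log (w n) / n) :
    limsup (fun n : ℕ => Real.log (u n) / n) atTop ≤
      limsup (fun n : ℕ => Real.log (w n) / n) atTop + Real.log c := by
  refine le_of_forall_pos_le_add fun δ hδ => limsup_log_div_le_of_eventually_le ?_
  filter_upwards [eventually_log_div_le hC hc huw (half_pos hδ),
    eventually_lt_of_limsup_lt (lt_add_of_pos_right _ (half_pos hδ)) hw] with n hu hlim
  linarith

theorem topEnt_le_of_shadowing {a b : (Fin d → ℝ) →L[ℝ] (Fin d → ℝ)} (h : IsUnstableInverse a b)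
    (ha : IsTorusLift a) (hF : IsTorusLift F) (hLip : LipschitzWith L F) {D : ℝ}
    (hshadow : ∀ (n : ℕ) w, ∃ v, ‖v - w‖ ≤ D ∧ (a * b) (F^[n] v) = (a * b) ((a ^ n) w)) :
    topEnt distQ a ≤ topEnt distQ F := by
  have : Nonempty {e : ℝ // 0 < e} := ⟨⟨1, one_pos⟩⟩
  refine ciSup_le fun e => le_of_forall_pos_le_add fun δ hδ => ?_
  have hμ : 1 < Real.exp (δ / (d + 1)) := Real.one_lt_exp_iff.mpr (by positivity)
  have hlog : Real.log (Real.exp (δ / (d + 1)) ^ d) ≤ δ := by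
    rw [Real.log_pow, Real.log_exp, mul_div_assoc', div_le_iff₀ (by positivity)]
    linarith
  obtain ⟨C, hC, hle⟩ := exists_sepNum_le h ha hF hLip hshadow e.2 hμ
  have hle' : ∀ᶠ n in atTop, (sepNum distQ a n e : ℝ) ≤
      C * (Real.exp (δ / (d + 1)) ^ d) ^ n * sepNum distQ F n (1 / (2 * (L + 1))) := by
    filter_upwards [eventually_gt_atTop 0] with n hn
    obtain ⟨k, rfl⟩ := Nat.exists_eq_succ_of_ne_zero hn.ne'
    refine (hle k).trans ?_
    gcongr
    · exact one_le_pow₀ hμ.le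
    · exact k.le_succ
  have hF' := limsup_log_sepNum_le_topEnt hF hLip (e := 1 / (2 * (L + 1))) (by positivity)
  have hlimsup := limsup_log_div_le_add hC (one_le_pow₀ hμ.le) hle'
    (isBoundedUnder_of_eventually_le (eventually_log_sepNum_div_le hF hLip (by positivity)))
  linarith

end Entropy

theorem statement5_general {d : ℕ} (A : Matrix (Fin d) (Fin d) ℤ) :
    ∃ η : ℝ≥0, 0 < η ∧ ∀ g : (Fin d → ℝ) → (Fin d → ℝ), LipschitzWith η g →
      (∀ (v : Fin d → ℝ) (m : Fin d → ℤ), g (v + latVec m) = g v) →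
        topEnt distQ (fun v => (matR A).mulVec v) ≤
          topEnt distQ (fun v => (matR A).mulVec v + g v) := by
  obtain ⟨a, hA⟩ : ∃ a : (Fin d → ℝ) →L[ℝ] (Fin d → ℝ), (matR A).mulVec = a :=
    ⟨LinearMap.toContinuousLinearMap (matR A).mulVecLin, rfl⟩
  obtain ⟨b, h⟩ := exists_isUnstableInverse a
  obtain ⟨η, hη, D, hD⟩ := exists_shadowing h
  refine ⟨η, hη, fun g hg hper => ?_⟩
  have ha : IsTorusLift a := hA ▸ isTorusLift_matR_mulVec A
  have hshadow := hD g hg (‖g 0‖ + η) (norm_le_of_periodic hg hper)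
  simp only [hA]
  exact topEnt_le_of_shadowing h ha (ha.add_periodic hper) (a.lipschitz.add hg) hshadow

/-- lower semicontinuity of topological entropy at ergodic toral
automorphisms in the `C¹` topology. Let `A ∈ GL(d,ℤ)` be ergodic. For every `ε > 0`
there is `η > 0` such that for every `C¹`, `ℤ^d`-periodic `g : ℝ^d → ℝ^d` of `C¹`-size
`< η` for which `F = A + g` is a `C¹` diffeomorphism of `ℝ^d`, the induced torus
homeomorphism `f` (computed on the lift `F`, with the quotient pseudometric `distQ`)
satisfies `h_top(f) ≥ h_top(T_A) − ε`. -/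
theorem statement5 {d : ℕ} (hd : 2 ≤ d) (A : Matrix (Fin d) (Fin d) ℤ)
    (hdet : A.det = 1 ∨ A.det = -1) (herg : IsErgodicMatrix A) :
    ∀ ε : ℝ, 0 < ε → ∃ η : ℝ, 0 < η ∧
      ∀ g : (Fin d → ℝ) → (Fin d → ℝ),
        ContDiff ℝ 1 g →
        (∀ (v : Fin d → ℝ) (m : Fin d → ℤ), g (v + latVec m) = g v) →
        (∀ v : Fin d → ℝ, ‖g v‖ + ‖fderiv ℝ g v‖ < η) →
        Function.Bijective (fun v => (matR A).mulVec v + g v) →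
        ContDiff ℝ 1 (Function.invFun (fun v => (matR A).mulVec v + g v)) →
        topEnt distQ (fun v => (matR A).mulVec v + g v) ≥
          topEnt distQ (fun v => (matR A).mulVec v) - ε := by
  obtain ⟨η, hη, h⟩ := statement5_general A
  refine fun ε hε => ⟨η, hη, fun g hg hper hsmall _ _ => ?_⟩
  have hlip : LipschitzWith η g :=
    lipschitzWith_of_nnnorm_fderiv_le (hg.differentiable one_ne_zero) fun v =>
      (le_add_of_nonneg_left (norm_nonneg (g v))).trans (hsmall v).le
  linarith [h g hlip hper]

end Paper
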